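/- Let p ≥ 1 and let Φ : 𝒲_p(ℝ²) → 𝒲_p(ℝ²) be an isometry such that Φ(μ) = μ for every μ whose support is contained in L₊ and every μ whose support is contained in L₋. Then Φ((P_{L₊})_#μ) = (P_{L₊})_#(Φ(μ)) and Φ((P_{L₋})_#μ) = (P_{L₋})_#(Φ(μ)) for all μ ∈ 𝒲_p(ℝ²), where P_{L₊}, P_{L₋} are the nearest-point projections onto L₊, L₋ in the maximum metric. -/

import Mathlib

open MeasureTheory

/-- The `p`-Wasserstein distance between two measures, defined as the infimum over all
couplings `π` of `μ` and `ν` of `(∬ d(x,y)^p dπ)^(1/p)`. -/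
noncomputable def Wdist {X : Type*} [MeasurableSpace X] [PseudoMetricSpace X] (p : ℝ)
    (μ ν : Measure X) : ℝ :=
  (⨅ π ∈ {π : Measure (X × X) | π.map Prod.fst = μ ∧ π.map Prod.snd = ν},
    (∫⁻ q, edist q.1 q.2 ^ p ∂π) ^ (1 / p)).toReal

/-- The `p`-Wasserstein space over `X`: Borel probability measures on `X` with finite
`p`-th moment. -/
def WSet (X : Type*) [MeasurableSpace X] [PseudoMetricSpace X] (p : ℝ) : Set (Measure X) :=
  {μ | IsProbabilityMeasure μ ∧ ∃ x₀ : X, ∫⁻ x, edist x x₀ ^ p ∂μ < ⊤}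

/-- An isometry of the underlying metric space: a distance-preserving bijection. -/
def IsIsom {X : Type*} [PseudoMetricSpace X] (T : X → X) : Prop :=
  Function.Bijective T ∧ ∀ x y, dist (T x) (T y) = dist x y

/-- An isometry of the `p`-Wasserstein space over `X`: a bijection of the space of
probability measures with finite `p`-th moment preserving the Wasserstein distance. -/
def IsWIsometry (X : Type*) [MeasurableSpace X] [PseudoMetricSpace X] (p : ℝ)
    (Φ : Measure X → Measure X) : Prop :=
  Set.BijOn Φ (WSet X p) (WSet X p) ∧
    ∀ μ ∈ WSet X p, ∀ ν ∈ WSet X p, Wdist p (Φ μ) (Φ ν) = Wdist p μ ν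

/-- The (topological) support of a measure. -/
def msupport {X : Type*} [TopologicalSpace X] [MeasurableSpace X] (μ : Measure X) : Set X :=
  {x | ∀ U : Set X, IsOpen U → x ∈ U → μ U ≠ 0}

def diagLine (ε a : ℝ) : Set (ℝ × ℝ) := {z | z.2 = ε * z.1 + a}

def Lplus : Set (ℝ × ℝ) := {z | z.2 = z.1}

def Lminus : Set (ℝ × ℝ) := {z | z.2 = -z.1}

/-- The closed square `Q = [-1,1]²`. -/
abbrev Qs : Set (ℝ × ℝ) := Set.Icc (-1, -1) (1, 1)

def LplusQ : Set ↥Qs := {q | (q : ℝ × ℝ).2 = (q : ℝ × ℝ).1}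

def LminusQ : Set ↥Qs := {q | (q : ℝ × ℝ).2 = -(q : ℝ × ℝ).1}

/-!
Rotating the plane by 45° turns `d_m` into the `ℓ¹` metric and `L₊`, `L₋` into the coordinate axes,
so the projection `P` onto either line `L` satisfies `d(x, y) = d(x, P x) + d(P x, y)` for `y ∈ L`.
Since `a ^ p + b ^ p ≤ (a + b) ^ p`, the `p`-th power `T` of the Wasserstein distance inherits a
Pythagorean inequality: `T(P_# μ, ρ) + T(μ, P_# μ) ≤ T(μ, ρ)` for every `ρ` carried by `L`.
As `Φ` preserves `T` and fixes `P_# μ` and `P_# Φ(μ)`, writing `ν = Φ(μ)` we get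
`T(P_# ν, P_# μ) + T(ν, P_# ν) ≤ T(ν, P_# μ) = T(μ, P_# μ) ≤ T(μ, P_# ν) = T(ν, P_# ν)`,
hence `T(P_# ν, P_# μ) = 0`.
-/

open scoped ENNReal NNReal

/-- `π` is a coupling (transport plan) of `μ` and `ν`: its marginals are `μ` and `ν`. -/
structure IsCoupling {X Y : Type*} [MeasurableSpace X] [MeasurableSpace Y]
    (π : Measure (X × Y)) (μ : Measure X) (ν : Measure Y) : Prop where
  map_fst : π.map Prod.fst = μ
  map_snd : π.map Prod.snd = ν

namespace IsCoupling

variable {X Y X' Y' : Type*} [MeasurableSpace X] [MeasurableSpace Y] [MeasurableSpace X']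
  [MeasurableSpace Y'] {π : Measure (X × Y)} {μ : Measure X} {ν : Measure Y}

lemma prod (μ : Measure X) (ν : Measure Y) [IsProbabilityMeasure μ] [IsProbabilityMeasure ν] :
    IsCoupling (μ.prod ν) μ ν :=
  ⟨by simp [Measure.map_fst_prod], by simp [Measure.map_snd_prod]⟩

lemma graph (μ : Measure X) {f : X → Y} (hf : Measurable f) :
    IsCoupling (μ.map fun x => (x, f x)) μ (μ.map f) where
  map_fst := (Measure.map_map measurable_fst (measurable_id.prodMk hf)).trans Measure.map_id
  map_snd := Measure.map_map measurable_snd (measurable_id.prodMk hf)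

lemma map (hπ : IsCoupling π μ ν) {f : X → X'} {g : Y → Y'} (hf : Measurable f)
    (hg : Measurable g) : IsCoupling (π.map (Prod.map f g)) (μ.map f) (ν.map g) where
  map_fst := by
    rw [Measure.map_map measurable_fst (hf.prodMap hg), ← hπ.map_fst,
      Measure.map_map hf measurable_fst, Prod.map_fst']
  map_snd := by
    rw [Measure.map_map measurable_snd (hf.prodMap hg), ← hπ.map_snd,
      Measure.map_map hg measurable_snd, Prod.map_snd']

lemma lintegral_fst (hπ : IsCoupling π μ ν) {f : X → ℝ≥0∞} (hf : Measurable f) :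
    ∫⁻ q, f q.1 ∂π = ∫⁻ x, f x ∂μ := by
  rw [← hπ.map_fst, lintegral_map hf measurable_fst]

lemma lintegral_snd (hπ : IsCoupling π μ ν) {f : Y → ℝ≥0∞} (hf : Measurable f) :
    ∫⁻ q, f q.2 ∂π = ∫⁻ y, f y ∂ν := by
  rw [← hπ.map_snd, lintegral_map hf measurable_snd]

lemma ae_snd (hπ : IsCoupling π μ ν) {s : Set Y} (hs : ∀ᵐ y ∂ν, y ∈ s) :
    ∀ᵐ q ∂π, q.2 ∈ s :=
  ae_of_ae_map measurable_snd.aemeasurable (hπ.map_snd ▸ hs)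

lemma levyProkhorovEDist_le {X : Type*} [MeasurableSpace X] [PseudoEMetricSpace X]
    [OpensMeasurableSpace X] {π : Measure (X × X)} {μ ν : Measure X} [IsProbabilityMeasure μ]
    [IsProbabilityMeasure ν] (hπ : IsCoupling π μ ν) {δ : ℝ≥0∞}
    (h : ∀ ε, δ < ε → ε < ⊤ → π {q | ε ≤ edist q.1 q.2} ≤ ε) :
    levyProkhorovEDist μ ν ≤ δ := by
  refine levyProkhorovEDist_le_of_forall_le μ ν δ fun ε B hδε hε hB => ?_
  have hsub : Prod.fst ⁻¹' B ⊆
      Prod.snd ⁻¹' Metric.thickening ε.toReal B ∪ {q : X × X | ε ≤ edist q.1 q.2} := by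
    refine fun q (hq : q.1 ∈ B) => (lt_or_ge (edist q.1 q.2) ε).imp_left fun hlt => ?_
    rw [Set.mem_preimage, Metric.mem_thickening_iff_infEDist_lt, ENNReal.ofReal_toReal hε.ne]
    exact (Metric.infEDist_le_edist_of_mem hq).trans_lt (edist_comm q.1 q.2 ▸ hlt)
  calc μ B = π (Prod.fst ⁻¹' B) := by rw [← hπ.map_fst, Measure.map_apply measurable_fst hB]
    _ ≤ π (Prod.snd ⁻¹' Metric.thickening ε.toReal B) + π {q | ε ≤ edist q.1 q.2} :=
      (measure_mono hsub).trans (measure_union_le _ _)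
    _ = ν (Metric.thickening ε.toReal B) + π {q | ε ≤ edist q.1 q.2} := by
      rw [← hπ.map_snd, Measure.map_apply measurable_snd Metric.isOpen_thickening.measurableSet]
    _ ≤ ν (Metric.thickening ε.toReal B) + ε := by gcongr; exact h ε hδε hε

end IsCoupling

lemma eq_of_levyProkhorovEDist_eq_zero {X : Type*} [MeasurableSpace X] [PseudoEMetricSpace X]
    [BorelSpace X] {μ ν : Measure X} [IsProbabilityMeasure μ] [IsProbabilityMeasure ν]
    (h : levyProkhorovEDist μ ν = 0) : μ = ν := by
  let toLP (ρ : Measure X) [hρ : IsProbabilityMeasure ρ] : LevyProkhorov (ProbabilityMeasure X) :=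
    .ofMeasure ⟨ρ, hρ⟩
  have hdist : dist (toLP μ) (toLP ν) = 0 := by
    rw [LevyProkhorov.dist_probabilityMeasure_def]
    exact congrArg ENNReal.toReal h
  exact congrArg (fun ρ => (ρ.toMeasure : Measure X)) (eq_of_dist_eq_zero hdist)

/-- The optimal transport cost for the cost function `d ^ p`, i.e. the `p`-th power of the
`p`-Wasserstein distance, with values in `[0, ∞]`. -/
noncomputable def transportCost {X : Type*} [MeasurableSpace X] [PseudoEMetricSpace X] (p : ℝ)
    (μ ν : Measure X) : ℝ≥0∞ :=
  ⨅ (π : Measure (X × X)) (_ : IsCoupling π μ ν), ∫⁻ q, edist q.1 q.2 ^ p ∂π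

section TransportCost

variable {X : Type*} [MeasurableSpace X] {p : ℝ} {μ ν : Measure X}

lemma transportCost_le_lintegral [PseudoEMetricSpace X] {π : Measure (X × X)}
    (hπ : IsCoupling π μ ν) : transportCost p μ ν ≤ ∫⁻ q, edist q.1 q.2 ^ p ∂π :=
  iInf₂_le π hπ

lemma transportCost_map_le [PseudoEMetricSpace X] (μ : Measure X) {f : X → X}
    (hf : Measurable f) : transportCost p μ (μ.map f) ≤ ∫⁻ x, edist x (f x) ^ p ∂μ :=
  (transportCost_le_lintegral (.graph μ hf)).trans (lintegral_map_le _ _)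

lemma levyProkhorovEDist_rpow_le_transportCost [PseudoEMetricSpace X]
    [SecondCountableTopology X] [OpensMeasurableSpace X] [IsProbabilityMeasure μ]
    [IsProbabilityMeasure ν] (hp : 0 ≤ p) :
    levyProkhorovEDist μ ν ^ (p + 1) ≤ transportCost p μ ν := by
  have hp1 : 0 < p + 1 := by positivity
  refine le_iInf₂ fun π hπ => ?_
  rw [← ENNReal.le_rpow_inv_iff hp1]
  refine hπ.levyProkhorovEDist_le fun ε hε hε_top => ?_
  rw [ENNReal.rpow_inv_lt_iff hp1, ENNReal.rpow_add_of_nonneg _ _ hp zero_le_one,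
    ENNReal.rpow_one] at hε
  have hε_pow : ε ^ p ≠ 0 := left_ne_zero_of_mul (pos_of_gt hε).ne'
  have hε_pow_top : ε ^ p ≠ ⊤ := ENNReal.rpow_ne_top_of_nonneg hp hε_top.ne
  have markov : ε ^ p * π {q | ε ≤ edist q.1 q.2} ≤ ∫⁻ q, edist q.1 q.2 ^ p ∂π :=
    calc ε ^ p * π {q | ε ≤ edist q.1 q.2}
        ≤ ε ^ p * π {q | ε ^ p ≤ edist q.1 q.2 ^ p} := by
          gcongr ε ^ p * ?_
          exact measure_mono fun q hq => ENNReal.rpow_le_rpow hq hp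
      _ ≤ ∫⁻ q, edist q.1 q.2 ^ p ∂π :=
          mul_meas_ge_le_lintegral (measurable_edist.pow_const p) _
  exact (ENNReal.mul_le_mul_iff_right hε_pow hε_pow_top).1 (markov.trans hε.le)

lemma eq_of_transportCost_eq_zero [PseudoEMetricSpace X] [SecondCountableTopology X]
    [BorelSpace X] [IsProbabilityMeasure μ] [IsProbabilityMeasure ν] (hp : 0 ≤ p)
    (h : transportCost p μ ν = 0) : μ = ν := by
  have hpow := nonpos_iff_eq_zero.1 (h ▸ levyProkhorovEDist_rpow_le_transportCost hp)
  exact eq_of_levyProkhorovEDist_eq_zero ((ENNReal.rpow_eq_zero_iff_of_pos (by positivity)).1 hpow)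

variable [PseudoMetricSpace X]

lemma Wdist_eq_toReal_transportCost_rpow (hp : 0 < p) (μ ν : Measure X) :
    Wdist p μ ν = (transportCost p μ ν ^ (1 / p)).toReal := by
  have hiInf (π : Measure (X × X)) :
      (⨅ _ : IsCoupling π μ ν, ∫⁻ q, edist q.1 q.2 ^ p ∂π) ^ (1 / p) =
        ⨅ _ : IsCoupling π μ ν, (∫⁻ q, edist q.1 q.2 ^ p ∂π) ^ (1 / p) :=
    (ENNReal.orderIsoRpow (1 / p) (by positivity)).map_iInf _
  have hcost : transportCost p μ ν ^ (1 / p) =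
      ⨅ (π : Measure (X × X)) (_ : IsCoupling π μ ν), (∫⁻ q, edist q.1 q.2 ^ p ∂π) ^ (1 / p) :=
    ((ENNReal.orderIsoRpow (1 / p) (by positivity)).map_iInf _).trans (iInf_congr hiInf)
  rw [hcost, Wdist]
  exact congrArg ENNReal.toReal
    (iInf_congr fun π => iInf_congr_Prop ⟨fun h => ⟨h.1, h.2⟩, fun h => ⟨h.1, h.2⟩⟩ fun _ => rfl)

lemma Wdist_eq_Wdist_iff {μ' ν' : Measure X} (hp : 0 < p) (h : transportCost p μ ν ≠ ⊤)
    (h' : transportCost p μ' ν' ≠ ⊤) :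
    Wdist p μ ν = Wdist p μ' ν' ↔ transportCost p μ ν = transportCost p μ' ν' := by
  have hp' : 0 < 1 / p := by positivity
  rw [Wdist_eq_toReal_transportCost_rpow hp, Wdist_eq_toReal_transportCost_rpow hp,
    ENNReal.toReal_eq_toReal_iff' (ENNReal.rpow_ne_top_of_nonneg hp'.le h)
      (ENNReal.rpow_ne_top_of_nonneg hp'.le h'), (ENNReal.rpow_left_injective hp'.ne').eq_iff]

end TransportCost

section WassersteinSpace

variable {X : Type*} [MeasurableSpace X] [PseudoMetricSpace X] {p : ℝ} {μ ν : Measure X}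

lemma lintegral_edist_rpow_lt_top_of_mem_WSet [OpensMeasurableSpace X] (hp : 1 ≤ p)
    (hμ : μ ∈ WSet X p) (y : X) : ∫⁻ x, edist x y ^ p ∂μ < ⊤ := by
  have hp0 : 0 ≤ p := zero_le_one.trans hp
  obtain ⟨_, x₀, hx₀⟩ := hμ
  have hconst : ∫⁻ _, edist x₀ y ^ p ∂μ < ⊤ := by
    simpa using ENNReal.rpow_lt_top_of_nonneg hp0 (edist_ne_top x₀ y)
  exact (lintegral_mono fun x => ENNReal.rpow_le_rpow (edist_triangle x x₀ y) hp0).trans_lt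
    (ENNReal.lintegral_rpow_add_lt_top_of_lintegral_rpow_lt_top
      measurable_edist_left.aemeasurable hx₀ hconst hp)

lemma transportCost_lt_top_of_mem_WSet [OpensMeasurableSpace X] (hp : 1 ≤ p)
    (hμ : μ ∈ WSet X p) (hν : ν ∈ WSet X p) : transportCost p μ ν < ⊤ := by
  have hp0 : 0 ≤ p := zero_le_one.trans hp
  have hν_moment := lintegral_edist_rpow_lt_top_of_mem_WSet hp hν
  obtain ⟨_, x₀, hx₀⟩ := hμ
  have := hν.1
  have hπ : IsCoupling (μ.prod ν) μ ν := .prod μ ν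
  have hmeas : Measurable fun x => edist x x₀ := measurable_edist_left
  calc transportCost p μ ν
      ≤ ∫⁻ q, edist q.1 q.2 ^ p ∂μ.prod ν := transportCost_le_lintegral hπ
    _ ≤ ∫⁻ q, (edist q.1 x₀ + edist q.2 x₀) ^ p ∂μ.prod ν :=
      lintegral_mono fun q => ENNReal.rpow_le_rpow (edist_triangle_right q.1 q.2 x₀) hp0
    _ < ⊤ := ENNReal.lintegral_rpow_add_lt_top_of_lintegral_rpow_lt_top
      (hmeas.comp measurable_fst).aemeasurable
      (by simpa only [hπ.lintegral_fst (hmeas.pow_const p)] using hx₀)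
      (by simpa only [hπ.lintegral_snd (hmeas.pow_const p)] using hν_moment x₀) hp

lemma map_mem_WSet_of_lipschitzWith [OpensMeasurableSpace X] {Y : Type*} [MeasurableSpace Y]
    [PseudoMetricSpace Y] [BorelSpace Y] (hp : 0 ≤ p) {K : ℝ≥0} {f : X → Y}
    (hf : LipschitzWith K f) (hμ : μ ∈ WSet X p) : μ.map f ∈ WSet Y p := by
  obtain ⟨_, x₀, hx₀⟩ := hμ
  refine ⟨Measure.isProbabilityMeasure_map hf.continuous.measurable.aemeasurable, f x₀, ?_⟩
  calc ∫⁻ y, edist y (f x₀) ^ p ∂μ.map f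
      ≤ ∫⁻ x, edist (f x) (f x₀) ^ p ∂μ := lintegral_map_le _ _
    _ ≤ ∫⁻ x, (K * edist x x₀) ^ p ∂μ :=
      lintegral_mono fun x => ENNReal.rpow_le_rpow (hf x x₀) hp
    _ = K ^ p * ∫⁻ x, edist x x₀ ^ p ∂μ := by
      simp only [ENNReal.mul_rpow_of_nonneg _ _ hp]
      exact lintegral_const_mul' _ _ (by finiteness)
    _ < ⊤ := ENNReal.mul_lt_top (by finiteness) hx₀

end WassersteinSpace

lemma msupport_subset_of_ae_mem {X : Type*} [TopologicalSpace X] [MeasurableSpace X]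
    {μ : Measure X} {s : Set X} (hs : IsClosed s) (h : ∀ᵐ x ∂μ, x ∈ s) : msupport μ ⊆ s :=
  fun _ hx => by_contra fun hxs => hx sᶜ hs.isOpen_compl hxs h

/-- `P` is a gate map onto `L`: the point `P x` of `L` lies metrically between `x` and every point
of `L`. The sets admitting such a map are the gated sets of Dress and Scharlau. -/
structure IsGateMap {X : Type*} [PseudoMetricSpace X] (P : X → X) (L : Set X) : Prop where
  mem : ∀ x, P x ∈ L
  dist_eq : ∀ x, ∀ y ∈ L, dist x y = dist x (P x) + dist (P x) y

namespace IsGateMap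

section PseudoMetricSpace

variable {X : Type*} [PseudoMetricSpace X] {P : X → X} {L : Set X} {p : ℝ}

lemma edist_eq (hP : IsGateMap P L) (x : X) {y : X} (hy : y ∈ L) :
    edist x y = edist x (P x) + edist (P x) y := by
  simp only [edist_dist, hP.dist_eq x y hy, ENNReal.ofReal_add dist_nonneg dist_nonneg]

lemma lipschitzWith (hP : IsGateMap P L) : LipschitzWith 1 P := by
  refine LipschitzWith.of_dist_le_mul fun x y => ?_
  have hxy := hP.dist_eq x (P y) (hP.mem y)
  have hyx := hP.dist_eq y (P x) (hP.mem x)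
  rw [dist_comm (P y)] at hyx
  rw [NNReal.coe_one, one_mul]
  linarith [dist_triangle x y (P y), dist_triangle_left y (P x) x]

lemma edist_rpow_add_le (hP : IsGateMap P L) (hp : 1 ≤ p) (x : X) {y : X} (hy : y ∈ L) :
    edist (P x) y ^ p + edist x (P x) ^ p ≤ edist x y ^ p := by
  rw [hP.edist_eq x hy, add_comm]
  exact ENNReal.add_rpow_le_rpow_add _ _ hp

lemma transportCost_add_le [MeasurableSpace X] [BorelSpace X] (hP : IsGateMap P L) (hp : 1 ≤ p)
    (μ : Measure X) {ρ : Measure X} (hρ : ∀ᵐ y ∂ρ, y ∈ L) :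
    transportCost p (μ.map P) ρ + transportCost p μ (μ.map P) ≤ transportCost p μ ρ := by
  have hP_meas : Measurable P := hP.lipschitzWith.continuous.measurable
  have hdist_meas : Measurable fun x => edist x (P x) ^ p :=
    (continuous_id.edist hP.lipschitzWith.continuous).measurable.pow_const p
  refine le_iInf₂ fun π hπ => ?_
  have hπ_map : IsCoupling (π.map (Prod.map P id)) (μ.map P) ρ := by
    simpa only [Measure.map_id] using hπ.map hP_meas measurable_id
  calc transportCost p (μ.map P) ρ + transportCost p μ (μ.map P)
      ≤ ∫⁻ q, edist (P q.1) q.2 ^ p ∂π + ∫⁻ x, edist x (P x) ^ p ∂μ := by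
        gcongr
        · exact (transportCost_le_lintegral hπ_map).trans (lintegral_map_le _ _)
        · exact transportCost_map_le μ hP_meas
    _ = ∫⁻ q, edist (P q.1) q.2 ^ p + edist q.1 (P q.1) ^ p ∂π := by
        rw [← hπ.lintegral_fst hdist_meas]
        exact (lintegral_add_right _ (hdist_meas.comp measurable_fst)).symm
    _ ≤ ∫⁻ q, edist q.1 q.2 ^ p ∂π :=
        lintegral_mono_ae ((hπ.ae_snd hρ).mono fun q hq => hP.edist_rpow_add_le hp q.1 hq)

end PseudoMetricSpace

section MetricSpace

variable {X : Type*} [MetricSpace X] {P : X → X} {L : Set X}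

lemma eq_of_dist_le (hP : IsGateMap P L) {x y : X} (hy : y ∈ L) (h : dist x y ≤ dist x (P x)) :
    y = P x := by
  have hdist := hP.dist_eq x y hy
  exact (dist_le_zero.1 (by linarith)).symm

lemma eq_nearestPointMap (hP : IsGateMap P L) {Q : X → X}
    (hQ : ∀ x, Q x ∈ L ∧ ∀ y ∈ L, dist x (Q x) ≤ dist x y) : Q = P :=
  funext fun x => hP.eq_of_dist_le (hQ x).1 ((hQ x).2 _ (hP.mem x))

lemma fixedPoints_eq (hP : IsGateMap P L) : Function.fixedPoints P = L := by
  ext x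
  refine ⟨fun hx => hx ▸ hP.mem x, fun hx => (hP.eq_of_dist_le hx ?_).symm⟩
  simp only [dist_self, dist_nonneg]

lemma isClosed (hP : IsGateMap P L) : IsClosed L :=
  hP.fixedPoints_eq ▸ isClosed_fixedPoints hP.lipschitzWith.continuous

end MetricSpace

end IsGateMap

theorem isometry_commutes_with_projections_general {X : Type*} [MetricSpace X]
    [SecondCountableTopology X] [MeasurableSpace X] [BorelSpace X] {p : ℝ} (hp : 1 ≤ p)
    {Φ : Measure X → Measure X} (hΦ : Set.MapsTo Φ (WSet X p) (WSet X p))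
    (hΦ_dist : ∀ μ ∈ WSet X p, ∀ ν ∈ WSet X p, Wdist p (Φ μ) (Φ ν) = Wdist p μ ν)
    {P : X → X} {L : Set X} (hP : IsGateMap P L)
    (hfix : ∀ μ ∈ WSet X p, msupport μ ⊆ L → Φ μ = μ) {μ : Measure X} (hμ : μ ∈ WSet X p) :
    Φ (μ.map P) = (Φ μ).map P := by
  have hp0 : 0 < p := zero_lt_one.trans_le hp
  have hmap {ρ} (hρ : ρ ∈ WSet X p) : ρ.map P ∈ WSet X p :=
    map_mem_WSet_of_lipschitzWith hp0.le hP.lipschitzWith hρ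
  have hmap_mem (ρ : Measure X) : ∀ᵐ y ∂ρ.map P, y ∈ L :=
    (ae_map_iff hP.lipschitzWith.continuous.aemeasurable hP.isClosed.measurableSet).2
      (ae_of_all _ hP.mem)
  have hmap_fix {ρ} (hρ : ρ ∈ WSet X p) : Φ (ρ.map P) = ρ.map P :=
    hfix _ (hmap hρ) (msupport_subset_of_ae_mem hP.isClosed (hmap_mem ρ))
  have hν : Φ μ ∈ WSet X p := hΦ hμ
  have hcost {ρ} (hρ : ρ ∈ WSet X p) :
      transportCost p (Φ μ) (ρ.map P) = transportCost p μ (ρ.map P) := by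
    rw [← Wdist_eq_Wdist_iff hp0 (transportCost_lt_top_of_mem_WSet hp hν (hmap hρ)).ne
      (transportCost_lt_top_of_mem_WSet hp hμ (hmap hρ)).ne]
    simpa only [hmap_fix hρ] using hΦ_dist μ hμ _ (hmap hρ)
  have hle : transportCost p ((Φ μ).map P) (μ.map P) + transportCost p (Φ μ) ((Φ μ).map P) ≤
      transportCost p (Φ μ) ((Φ μ).map P) :=
    calc _ ≤ transportCost p (Φ μ) (μ.map P) := hP.transportCost_add_le hp (Φ μ) (hmap_mem μ)
      _ = transportCost p μ (μ.map P) := hcost hμ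
      _ ≤ transportCost p μ ((Φ μ).map P) :=
        le_add_self.trans (hP.transportCost_add_le hp μ (hmap_mem (Φ μ)))
      _ = transportCost p (Φ μ) ((Φ μ).map P) := (hcost hν).symm
  have hzero : transportCost p ((Φ μ).map P) (μ.map P) = 0 :=
    nonpos_iff_eq_zero.1 <|
      (ENNReal.add_le_add_iff_right (transportCost_lt_top_of_mem_WSet hp hν (hmap hν)).ne).1
        (hle.trans_eq (zero_add _).symm)
  have := (hmap hμ).1
  have := (hmap hν).1
  rw [hmap_fix hμ, eq_of_transportCost_eq_zero hp0.le hzero]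

lemma max_abs_abs_eq_abs_add_abs (a b : ℝ) :
    max |a| |b| = |(a + b) / 2| + |(a - b) / 2| := by
  grind

lemma dist_eq_abs_half_add_add_abs_half_sub (x y : ℝ × ℝ) :
    dist x y = |(x.1 + x.2) / 2 - (y.1 + y.2) / 2| + |(x.1 - x.2) / 2 - (y.1 - y.2) / 2| := by
  rw [Prod.dist_eq, Real.dist_eq, Real.dist_eq, max_abs_abs_eq_abs_add_abs]
  congr 2 <;> ring

lemma isGateMap_Lplus : IsGateMap (fun x => ((x.1 + x.2) / 2, (x.1 + x.2) / 2)) Lplus where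
  mem _ := rfl
  dist_eq x y (hy : y.2 = y.1) := by
    simp [dist_eq_abs_half_add_add_abs_half_sub, hy, add_comm]

lemma isGateMap_Lminus : IsGateMap (fun x => ((x.1 - x.2) / 2, -((x.1 - x.2) / 2))) Lminus where
  mem _ := rfl
  dist_eq x y (hy : y.2 = -y.1) := by
    simp [dist_eq_abs_half_add_add_abs_half_sub, hy]

/-- If an isometry of `𝒲_p(ℝ², d_m)` fixes all measures supported on `L₊` and all
measures supported on `L₋`, then it commutes with the push-forwards of the nearest-point
projections onto `L₊` and `L₋`. -/
theorem isometry_commutes_with_projections (p : ℝ) (hp : 1 ≤ p)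
    (Φ : Measure (ℝ × ℝ) → Measure (ℝ × ℝ)) (hΦ : IsWIsometry (ℝ × ℝ) p Φ)
    (hfix : ∀ μ ∈ WSet (ℝ × ℝ) p,
      (msupport μ ⊆ Lplus ∨ msupport μ ⊆ Lminus) → Φ μ = μ)
    (Pp Pm : ℝ × ℝ → ℝ × ℝ)
    (hPp : ∀ x : ℝ × ℝ, Pp x ∈ Lplus ∧ ∀ y ∈ Lplus, dist x (Pp x) ≤ dist x y)
    (hPm : ∀ x : ℝ × ℝ, Pm x ∈ Lminus ∧ ∀ y ∈ Lminus, dist x (Pm x) ≤ dist x y) :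
    ∀ μ ∈ WSet (ℝ × ℝ) p,
      Φ (μ.map Pp) = (Φ μ).map Pp ∧ Φ (μ.map Pm) = (Φ μ).map Pm := by
  obtain rfl := isGateMap_Lplus.eq_nearestPointMap hPp
  obtain rfl := isGateMap_Lminus.eq_nearestPointMap hPm
  exact fun μ hμ =>
    ⟨isometry_commutes_with_projections_general hp hΦ.1.mapsTo hΦ.2 isGateMap_Lplus
        (fun ν hν h => hfix ν hν (.inl h)) hμ,
      isometry_commutes_with_projections_general hp hΦ.1.mapsTo hΦ.2 isGateMap_Lminus
        (fun ν hν h => hfix ν hν (.inr h)) hμ⟩
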